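/- arXiv:2512.01168 — 2 statements merged into one kernel-verified Lean document; each statement's English description precedes it below -/
import Mathlib

section
/- Let d ≥ 1, δ ∈ (0,1], and let a : ℝ → 𝕊_δ be measurable. Then for every u ∈ C₀^∞(ℝ^{1+d}), ∫_{ℝ^{1+d}} ( |∂_t u(t,x)|² + δ² Σ_{i,j} |D_{ij}u(t,x)|² ) dx dt ≤ δ⁻² ∫_{ℝ^{1+d}} | ∂_t u(t,x) + Σ_{i,j} a^{ij}(t) D_{ij}u(t,x) |² dx dt. -/
open MeasureTheory Metric Set
open scoped ENNReal NNReal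

noncomputable section

abbrev Spc (d : ℕ) : Type := EuclideanSpace ℝ (Fin d)

abbrev Pt (d : ℕ) : Type := ℝ × Spc d

instance matrixMeasurableSpace (d : ℕ) : MeasurableSpace (Matrix (Fin d) (Fin d) ℝ) :=
  (inferInstance : MeasurableSpace (Fin d → Fin d → ℝ))

/-- Membership in `𝕊_δ`: symmetric `d×d` matrices with
`δ|ξ|² ≤ (aξ,ξ) ≤ δ⁻¹|ξ|²`. -/
def inS (d : ℕ) (δ : ℝ) (a : Matrix (Fin d) (Fin d) ℝ) : Prop :=
  a.IsSymm ∧ ∀ ξ : Fin d → ℝ,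
    δ * (∑ i, ξ i ^ 2) ≤ (∑ i, ∑ j, a i j * ξ i * ξ j) ∧
    (∑ i, ∑ j, a i j * ξ i * ξ j) ≤ δ⁻¹ * (∑ i, ξ i ^ 2)

/-- `{a,u} = a^{ij} a^{kr} u_{ik} u_{jr}`. -/
def bra (d : ℕ) (a u : Matrix (Fin d) (Fin d) ℝ) : ℝ :=
  ∑ i, ∑ j, ∑ k, ∑ r, a i j * a k r * u i k * u j r

/-- Frobenius norm of a `d×d` array. -/
def mnorm {d : ℕ} (m : Fin d → Fin d → ℝ) : ℝ :=
  Real.sqrt (∑ i, ∑ j, m i j ^ 2)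

/-- Euclidean norm of a vector given as `Fin d → ℝ`. -/
def vnorm {d : ℕ} (v : Fin d → ℝ) : ℝ :=
  Real.sqrt (∑ i, v i ^ 2)

/-- Parabolic cylinder `C_R(t,x) = (t, t+R²) × B_R(x)`. -/
def cyl (d : ℕ) (R t : ℝ) (x : Spc d) : Set (Pt d) :=
  Ioo t (t + R ^ 2) ×ˢ ball x R

/-- Time derivative `∂_t u`. -/
def Dt {d : ℕ} (u : Pt d → ℝ) (z : Pt d) : ℝ :=
  deriv (fun s => u (s, z.2)) z.1

/-- Spatial derivative `D_i u`. -/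
def Dx {d : ℕ} (i : Fin d) (u : Pt d → ℝ) (z : Pt d) : ℝ :=
  fderiv ℝ (fun y => u (z.1, y)) z.2 (EuclideanSpace.single i 1)

/-- Second spatial derivative `D_{ij} u = D_i D_j u`. -/
def Dxx {d : ℕ} (i j : Fin d) (u : Pt d → ℝ) : Pt d → ℝ :=
  Dx i (Dx j u)

/-- `u ∈ C₀^∞(ℝ^{1+d})`. -/
def CinfC {d : ℕ} (u : Pt d → ℝ) : Prop :=
  ContDiff ℝ (⊤ : ℕ∞) u ∧ HasCompactSupport u

/-- The kernel `p_{α,k}(s,r)`. -/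
def pak (d : ℕ) (α k s r : ℝ) : ℝ :=
  if 0 < s then s ^ (-((d : ℝ) + 2 - α) / 2) * Real.exp (-(r ^ 2) / (k * s)) else 0

/-- Parabolic distance to the origin `ρ(t,x) = |x| + √|t|`. -/
def prho {d : ℕ} (z : Pt d) : ℝ := ‖z.2‖ + Real.sqrt |z.1|

/-- Average of (the positive part of) `g` over `C`, valued in `ℝ≥0∞`. -/
def aveLin {d : ℕ} (C : Set (Pt d)) (g : Pt d → ℝ) : ℝ≥0∞ :=
  (volume C)⁻¹ * ∫⁻ z in C, ENNReal.ofReal (g z)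

/-- Parabolic maximal function `𝕄_β g` (for `g ≥ 0`). -/
def maxF {d : ℕ} (β : ℝ) (g : Pt d → ℝ) (z : Pt d) : ℝ≥0∞ :=
  ⨆ (ρ : ℝ) (_ : 0 < ρ) (t : ℝ) (x : Spc d) (_ : z ∈ cyl d ρ t x),
    ENNReal.ofReal (ρ ^ β) * aveLin (cyl d ρ t x) g

/-- Oscillation of a matrix-valued function over `C`. -/
def oscC {d : ℕ} (C : Set (Pt d)) (g : Pt d → Fin d → Fin d → ℝ) : ℝ :=
  ⨍ z₁ in C, ⨍ z₂ in C, mnorm (fun i j => g z₁ i j - g z₂ i j)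

/-- Mixed norm `‖f‖_{𝕃_{q,p}}` (inner integration in `t`, outer in `x`). -/
def mixedNorm {d : ℕ} (q p : ℝ) (f : Pt d → ℝ) : ℝ :=
  (∫ x : Spc d, (∫ t : ℝ, |f (t, x)| ^ q) ^ (p / q)) ^ (1 / p)

/-- Mixed norm on a set `Γ`. -/
def mixedNormOn {d : ℕ} (q p : ℝ) (Γ : Set (Pt d)) (f : Pt d → ℝ) : ℝ :=
  mixedNorm q p (Γ.indicator f)

/-- Normalized (averaged) mixed norm over the cylinder `C_R(t,x)`, in `ℝ≥0∞`. -/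
def cylNormL {d : ℕ} (q p R t : ℝ) (x : Spc d) (f : Pt d → ℝ) : ℝ≥0∞ :=
  ((volume (ball x R))⁻¹ * ∫⁻ y in ball x R,
      ((volume (Ioo t (t + R ^ 2)))⁻¹ * ∫⁻ s in Ioo t (t + R ^ 2),
        ENNReal.ofReal |f (s, y)| ^ q) ^ (p / q)) ^ (1 / p)

/-- Mixed norm on a set, valued in `ℝ≥0∞`. -/
def mixedNormLe {d : ℕ} (q p : ℝ) (Γ : Set (Pt d)) (f : Pt d → ℝ) : ℝ≥0∞ :=
  (∫⁻ x : Spc d, (∫⁻ t : ℝ, ENNReal.ofReal |Γ.indicator f (t, x)| ^ q) ^ (p / q)) ^ (1 / p)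

/-- `ã_C(t)`: average of `a(t,·)` over the ball of the cylinder. -/
def aTilde {d : ℕ} (a : Pt d → Matrix (Fin d) (Fin d) ℝ) (R : ℝ) (x₀ : Spc d) (t : ℝ)
    (i j : Fin d) : ℝ :=
  ⨍ y in ball x₀ R, a (t, y) i j

/-- The mean oscillation of `a` w.r.t. `x` over one cylinder. -/
def aSharpCyl {d : ℕ} (a : Pt d → Matrix (Fin d) (Fin d) ℝ) (R t₀ : ℝ) (x₀ : Spc d) : ℝ≥0∞ :=
  (volume (cyl d R t₀ x₀))⁻¹ * ∫⁻ z in cyl d R t₀ x₀,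
    ENNReal.ofReal (mnorm (fun i j => a z i j - aTilde a R x₀ z.1 i j))

/-- `a^♯`. -/
def aSharp {d : ℕ} (a : Pt d → Matrix (Fin d) (Fin d) ℝ) : ℝ≥0∞ :=
  ⨆ (R : ℝ) (_ : 0 < R) (t₀ : ℝ) (x₀ : Spc d), aSharpCyl a R t₀ x₀

/-- `a^♯_ρ` (only cylinders of radius `≤ ρa`). -/
def aSharpRho {d : ℕ} (a : Pt d → Matrix (Fin d) (Fin d) ℝ) (ρa : ℝ) : ℝ≥0∞ :=
  ⨆ (R : ℝ) (_ : 0 < R) (_ : R ≤ ρa) (t₀ : ℝ) (x₀ : Spc d), aSharpCyl a R t₀ x₀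

/-- Homogeneous Morrey norm `‖g‖_{Ė_{p,β}}`. -/
def morreyP {d : ℕ} (p β : ℝ) (g : Pt d → ℝ) : ℝ≥0∞ :=
  ⨆ (ρ : ℝ) (_ : 0 < ρ) (t : ℝ) (x : Spc d),
    ENNReal.ofReal (ρ ^ β) *
      ((volume (cyl d ρ t x))⁻¹ * ∫⁻ z in cyl d ρ t x, ENNReal.ofReal |g z| ^ p) ^ (1 / p)

/-- Homogeneous mixed-norm Morrey norm `‖g‖_{Ė_{q,p,β}}`. -/
def morreyQP {d : ℕ} (q p β : ℝ) (g : Pt d → ℝ) : ℝ≥0∞ :=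
  ⨆ (ρ : ℝ) (_ : 0 < ρ) (t : ℝ) (x : Spc d),
    ENNReal.ofReal (ρ ^ β) * cylNormL q p ρ t x g

/-- Inhomogeneous mixed-norm Morrey norm `‖g‖_{E_{q,p,β}}` (radii `ρ ∈ (0,1]`). -/
def morreyI {d : ℕ} (q p β : ℝ) (g : Pt d → ℝ) : ℝ≥0∞ :=
  ⨆ (ρ : ℝ) (_ : 0 < ρ) (_ : ρ ≤ 1) (t : ℝ) (x : Spc d),
    ENNReal.ofReal (ρ ^ β) * cylNormL q p ρ t x g

/-- `b̄_{q',p',ρb}` for a vector field `b`. -/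
def bBar {d : ℕ} (q' p' : ℝ) (b : Pt d → Fin d → ℝ) (ρb : ℝ) : ℝ≥0∞ :=
  ⨆ (R : ℝ) (_ : 0 < R) (_ : R ≤ ρb) (t : ℝ) (x : Spc d),
    ENNReal.ofReal R * cylNormL q' p' R t x (fun z => vnorm (b z))

/-- Test function supported in the open set `Q`. -/
def IsTest {d : ℕ} (Q : Set (Pt d)) (φ : Pt d → ℝ) : Prop :=
  ContDiff ℝ (⊤ : ℕ∞) φ ∧ HasCompactSupport φ ∧ tsupport φ ⊆ Q

/-- `ut` is the weak time derivative of `u` on `Q`. -/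
def WeakDtOn {d : ℕ} (Q : Set (Pt d)) (u ut : Pt d → ℝ) : Prop :=
  ∀ φ, IsTest Q φ → ∫ z in Q, u z * Dt φ z = - ∫ z in Q, ut z * φ z

/-- `ui` is the weak `i`-th spatial derivative of `u` on `Q`. -/
def WeakDxOn {d : ℕ} (Q : Set (Pt d)) (i : Fin d) (u ui : Pt d → ℝ) : Prop :=
  ∀ φ, IsTest Q φ → ∫ z in Q, u z * Dx i φ z = - ∫ z in Q, ui z * φ z

/-!
For fixed `t` and positive semidefinite matrices `P`, `S`, integrating by parts twice gives
`∫ tr(P D²u) tr(S D²u) dx = ∫ tr(P D²u S D²u) dx ≥ 0`. With `P = S = 1` the integrals of `(Δu)²` and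
of `∑ |D_{ij}u|²` agree. With `P = a(t) - δ` and `S = 1 - δ a(t)`, integration over `t` shows that
`g = tr(a D²u)` and `q = Δu` satisfy `⟪g - δ q, q - δ g⟫ ≥ 0` in `L²`. Since `p = ∂_t u` is
orthogonal to `q`, the estimate reduces to the inequality `δ² (‖p‖² + ‖q‖²) ≤ ‖p + g‖²`, valid in
every inner product space.
-/

open scoped SchwartzMap LineDeriv Matrix RealInnerProductSpace

section InnerProductSpace

variable {F : Type*} [NormedAddCommGroup F] [InnerProductSpace ℝ F]

lemma mul_norm_sub_sq_le (s : ℝ) (x y : F) :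
    s * (1 - s) * ‖x - y‖ ^ 2 ≤ s * ‖x‖ ^ 2 + (1 - s) * ‖y‖ ^ 2 := by
  have h := norm_add_sq_real (s • x) ((1 - s) • y)
  simp only [norm_smul, real_inner_smul_left, real_inner_smul_right, mul_pow, Real.norm_eq_abs,
    sq_abs] at h
  rw [norm_sub_sq_real]
  linarith [sq_nonneg ‖s • x + (1 - s) • y‖]

lemma sq_mul_norm_sq_add_norm_sq_le {p q g : F} {δ : ℝ} (hδ0 : 0 ≤ δ) (hδ1 : δ ≤ 1)
    (hpq : ⟪p, q⟫ = 0) (hg : 0 ≤ ⟪g - δ • q, q - δ • g⟫) :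
    δ ^ 2 * (‖p‖ ^ 2 + ‖q‖ ^ 2) ≤ ‖p + g‖ ^ 2 := by
  obtain ⟨h, rfl⟩ : ∃ h, g = h + δ • q := ⟨g - δ • q, by abel⟩
  have hhq : δ * ‖h‖ ^ 2 ≤ (1 - δ ^ 2) * ⟪h, q⟫ := by
    have : q - δ • (h + δ • q) = (1 - δ ^ 2) • q - δ • h := by module
    rw [add_sub_cancel_right, this, inner_sub_right, real_inner_smul_right, real_inner_smul_right,
      real_inner_self_eq_norm_sq] at hg
    linarith
  have expand : ‖p + (h + δ • q)‖ ^ 2 = ‖p + h‖ ^ 2 + 2 * δ * ⟪h, q⟫ + δ ^ 2 * ‖q‖ ^ 2 := by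
    rw [← add_assoc, norm_add_sq_real, real_inner_smul_right, inner_add_left, hpq, norm_smul,
      mul_pow, Real.norm_eq_abs, sq_abs]
    ring
  suffices δ ^ 2 * ‖p‖ ^ 2 ≤ ‖p + h‖ ^ 2 + 2 * δ * ⟪h, q⟫ by linarith
  rcases hδ1.eq_or_lt with rfl | hlt
  · have h0 : h = 0 := by
      rw [← norm_eq_zero, ← sq_eq_zero_iff]
      exact le_antisymm (by linarith) (sq_nonneg _)
    simp [h0]
  · have hpos : 0 < 1 - δ ^ 2 := by nlinarith
    have hconv := mul_norm_sub_sq_le (1 - δ ^ 2) (p + h) h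
    rw [add_sub_cancel_right] at hconv
    refine le_of_mul_le_mul_left ?_ hpos
    have hδhq := mul_le_mul_of_nonneg_left hhq hδ0
    calc (1 - δ ^ 2) * (δ ^ 2 * ‖p‖ ^ 2)
        ≤ (1 - δ ^ 2) * ‖p + h‖ ^ 2 + δ ^ 2 * ‖h‖ ^ 2 := by linarith
      _ ≤ (1 - δ ^ 2) * ‖p + h‖ ^ 2 + 2 * (δ ^ 2 * ‖h‖ ^ 2) := by
          linarith [mul_nonneg (sq_nonneg δ) (sq_nonneg ‖h‖)]
      _ ≤ (1 - δ ^ 2) * (‖p + h‖ ^ 2 + 2 * δ * ⟪h, q⟫) := by linarith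

end InnerProductSpace

section L2

variable {Ω : Type*} [MeasurableSpace Ω] {μ : Measure Ω} {p q g : Ω → ℝ}

lemma inner_toLp_eq_integral_mul (hp : MemLp p 2 μ) (hq : MemLp q 2 μ) :
    ⟪hp.toLp p, hq.toLp q⟫ = ∫ x, p x * q x ∂μ := by
  rw [L2.inner_def]
  refine integral_congr_ae ?_
  filter_upwards [hp.coeFn_toLp, hq.coeFn_toLp] with x hpx hqx
  rw [hpx, hqx, RCLike.inner_apply, conj_trivial, mul_comm]

lemma norm_toLp_sq_eq_integral_sq (hp : MemLp p 2 μ) :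
    ‖hp.toLp p‖ ^ 2 = ∫ x, p x ^ 2 ∂μ := by
  rw [← real_inner_self_eq_norm_sq, inner_toLp_eq_integral_mul]
  simp only [sq]

lemma integral_sq_add_sq_le_of_integral_mul_eq_zero {δ : ℝ} (hδ0 : 0 < δ) (hδ1 : δ ≤ 1)
    (hp : MemLp p 2 μ) (hq : MemLp q 2 μ) (hg : MemLp g 2 μ) (hpq : ∫ x, p x * q x ∂μ = 0)
    (hgq : 0 ≤ ∫ x, (g x - δ * q x) * (q x - δ * g x) ∂μ) :
    ∫ x, (p x ^ 2 + q x ^ 2) ∂μ ≤ δ⁻¹ ^ 2 * ∫ x, (p x + g x) ^ 2 ∂μ := by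
  have key := sq_mul_norm_sq_add_norm_sq_le (p := hp.toLp p) (q := hq.toLp q) (g := hg.toLp g)
    hδ0.le hδ1 (by rwa [inner_toLp_eq_integral_mul]) (by
      rw [← hq.toLp_const_smul, ← hg.toLp_const_smul, ← hg.toLp_sub (hq.const_smul δ),
        ← hq.toLp_sub (hg.const_smul δ), inner_toLp_eq_integral_mul]
      exact hgq)
  rw [← hp.toLp_add hg] at key
  simp only [norm_toLp_sq_eq_integral_sq, Pi.add_apply] at key
  rw [integral_add hp.integrable_sq hq.integrable_sq, inv_pow, inv_mul_eq_div,
    le_div_iff₀ (by positivity), mul_comm]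
  exact key

end L2

section Matrix

variable {ι : Type*}

lemma trace_mul_eq_sum {R κ : Type*} [NonUnitalNonAssocSemiring R] [Fintype ι] [Fintype κ]
    (A : Matrix ι κ R) (B : Matrix κ ι R) : (A * B).trace = ∑ i, ∑ j, A i j * B j i := rfl

open scoped ComplexOrder MatrixOrder in
lemma trace_mul_mul_mul_conjTranspose_nonneg {𝕜 κ : Type*} [RCLike 𝕜] [Fintype ι] [Fintype κ]
    {P : Matrix ι ι 𝕜} {S : Matrix κ κ 𝕜} (hP : P.PosSemidef) (hS : S.PosSemidef)
    (H : Matrix ι κ 𝕜) : 0 ≤ (P * H * S * Hᴴ).trace := by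
  classical
  obtain ⟨B, rfl⟩ := CStarAlgebra.nonneg_iff_eq_star_mul_self.mp hP.nonneg
  rw [Matrix.star_eq_conjTranspose]
  have hcycle : (Bᴴ * B * H * S * Hᴴ).trace = ((B * H) * S * (B * H)ᴴ).trace := by
    simp only [Matrix.conjTranspose_mul, Matrix.mul_assoc]
    rw [Matrix.trace_mul_comm]
    simp only [Matrix.mul_assoc]
  rw [hcycle]
  exact (hS.mul_mul_conjTranspose_same (B * H)).trace_nonneg

lemma sq_apply_le_of_posSemidef {A : Matrix ι ι ℝ} (hA : A.PosSemidef) (i j : ι) :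
    A i j ^ 2 ≤ A i i * A j j := by
  classical
  have hdet := (hA.submatrix ![i, j]).det_nonneg
  have hsymm : A j i = A i j := by simpa using hA.isHermitian.apply i j
  simp only [Matrix.det_fin_two, Matrix.submatrix_apply, Matrix.cons_val_zero,
    Matrix.cons_val_one, hsymm] at hdet
  linarith

lemma dotProduct_mulVec_smul_add_smul_one {R : Type*} [CommSemiring R] [Fintype ι]
    [DecidableEq ι] (A : Matrix ι ι R) (α β : R) (ξ : ι → R) :
    ξ ⬝ᵥ (α • A + β • 1) *ᵥ ξ = α * (∑ i, ∑ j, A i j * ξ i * ξ j) + β * ∑ i, ξ i ^ 2 := by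
  have hquad : ξ ⬝ᵥ A *ᵥ ξ = ∑ i, ∑ j, A i j * ξ i * ξ j := by
    simp only [dotProduct, Matrix.mulVec, Finset.mul_sum]
    exact Finset.sum_congr rfl fun i _ => Finset.sum_congr rfl fun j _ => by ring
  rw [Matrix.add_mulVec, Matrix.smul_mulVec, Matrix.smul_mulVec, Matrix.one_mulVec,
    dotProduct_add, dotProduct_smul, dotProduct_smul, hquad]
  simp only [smul_eq_mul, dotProduct, sq]

end Matrix

section Elliptic

variable {d : ℕ} {δ : ℝ} {a : Matrix (Fin d) (Fin d) ℝ}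

lemma inS.isHermitian (ha : inS d δ a) : a.IsHermitian := by
  rw [Matrix.IsHermitian, Matrix.conjTranspose_eq_transpose_of_trivial]
  exact ha.1

lemma inS.posSemidef_sub_smul_one (ha : inS d δ a) : (a - δ • 1).PosSemidef := by
  refine .of_dotProduct_mulVec_nonneg
    (ha.isHermitian.sub (Matrix.isHermitian_one.smul (IsSelfAdjoint.all δ))) fun ξ => ?_
  have := dotProduct_mulVec_smul_add_smul_one a 1 (-δ) ξ
  rw [one_smul, neg_smul, ← sub_eq_add_neg] at this
  rw [star_trivial, this]
  linarith [(ha.2 ξ).1]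

lemma inS.posSemidef_one_sub_smul (hδ : 0 < δ) (ha : inS d δ a) : (1 - δ • a).PosSemidef := by
  refine .of_dotProduct_mulVec_nonneg
    (Matrix.isHermitian_one.sub (ha.isHermitian.smul (IsSelfAdjoint.all δ))) fun ξ => ?_
  have := dotProduct_mulVec_smul_add_smul_one a (-δ) 1 ξ
  rw [one_smul, neg_smul, neg_add_eq_sub] at this
  have hle := mul_le_mul_of_nonneg_left (ha.2 ξ).2 hδ.le
  rw [mul_inv_cancel_left₀ hδ.ne'] at hle
  rw [star_trivial, this]
  linarith

lemma inS.abs_apply_le (hδ : 0 < δ) (ha : inS d δ a) (i j : Fin d) : |a i j| ≤ δ⁻¹ := by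
  have hdiag_le : ∀ k, a k k ≤ δ⁻¹ := fun k => by
    have := (ha.posSemidef_one_sub_smul hδ).diag_nonneg (i := k)
    rw [Matrix.sub_apply, Matrix.one_apply_eq, Matrix.smul_apply, smul_eq_mul, sub_nonneg] at this
    rwa [← one_div, le_div_iff₀' hδ]
  have hpsd : a.PosSemidef := by
    simpa using ha.posSemidef_sub_smul_one.add (Matrix.PosSemidef.one.smul hδ.le)
  refine abs_le_of_sq_le_sq ?_ (by positivity)
  calc a i j ^ 2 ≤ a i i * a j j := sq_apply_le_of_posSemidef hpsd i j
    _ ≤ δ⁻¹ * δ⁻¹ := mul_le_mul (hdiag_le i) (hdiag_le j) hpsd.diag_nonneg (by positivity)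
    _ = δ⁻¹ ^ 2 := (sq _).symm

end Elliptic

section Schwartz

variable {E : Type*} [NormedAddCommGroup E] [NormedSpace ℝ E]

lemma lineDerivOp_comm {V : Type*} [NormedAddCommGroup V] [NormedSpace ℝ V]
    (f : 𝓢(E, V)) (v w : E) : ∂_{v} (∂_{w} f) = ∂_{w} (∂_{v} f) := by
  ext x
  have hsnd : ∀ v w : E, ∂_{v} (∂_{w} f) x = fderiv ℝ (fderiv ℝ f) x v w := fun v w => by
    have hdiff : DifferentiableAt ℝ (fderiv ℝ f) x :=
      (SchwartzMap.fderivCLM ℝ E V f).differentiableAt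
    simp only [SchwartzMap.lineDerivOp_apply_eq_fderiv]
    change fderiv ℝ (fun y => fderiv ℝ f y w) x v = _
    rw [fderiv_clm_apply hdiff (differentiableAt_const w)]
    simp
  rw [hsnd, hsnd]
  exact ((f.smooth 2).contDiffAt.isSymmSndFDerivAt (by simp)).eq v w

variable {ι : Type*}

/-- The Hessian of a Schwartz function along a family of directions `b`: its entries are the
iterated directional derivatives `∂_{b i} ∂_{b j} f`. -/
def hessian (b : ι → E) (f : 𝓢(E, ℝ)) (x : E) : Matrix ι ι ℝ :=
  Matrix.of fun i j => ∂_{b i} (∂_{b j} f) x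

lemma hessian_isHermitian (b : ι → E) (f : 𝓢(E, ℝ)) (x : E) : (hessian b f x).IsHermitian :=
  Matrix.ext fun i j => by
    rw [Matrix.conjTranspose_apply, star_trivial, hessian, Matrix.of_apply, Matrix.of_apply,
      lineDerivOp_comm]

variable [MeasurableSpace E] [BorelSpace E] [FiniteDimensional ℝ E] {μ : Measure E}
  [μ.IsAddHaarMeasure]

lemma integral_lineDerivOp_mul_lineDerivOp_swap (f : 𝓢(E, ℝ)) (u v w z : E) :
    ∫ x, ∂_{u} (∂_{v} f) x * ∂_{w} (∂_{z} f) x ∂μ =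
      ∫ x, ∂_{u} (∂_{z} f) x * ∂_{w} (∂_{v} f) x ∂μ := by
  rw [lineDerivOp_comm f w z, lineDerivOp_comm f w v,
    SchwartzMap.integral_mul_lineDerivOp_right_eq_neg_left (∂_{u} (∂_{v} f)),
    SchwartzMap.integral_mul_lineDerivOp_right_eq_neg_left (∂_{u} (∂_{z} f)),
    lineDerivOp_comm f u v, lineDerivOp_comm f u z, lineDerivOp_comm (∂_{u} f)]

lemma integral_lineDerivOp_mul_lineDerivOp_self_eq_zero (f : 𝓢(E, ℝ)) (v w : E) :
    ∫ x, ∂_{v} f x * ∂_{w} (∂_{w} f) x ∂μ = 0 := by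
  have hanti : ∫ x, ∂_{w} f x * ∂_{v} (∂_{w} f) x ∂μ =
      -∫ x, ∂_{w} f x * ∂_{v} (∂_{w} f) x ∂μ := by
    conv_lhs => rw [SchwartzMap.integral_mul_lineDerivOp_right_eq_neg_left]
    simp only [mul_comm]
  rw [SchwartzMap.integral_mul_lineDerivOp_right_eq_neg_left, lineDerivOp_comm]
  simp only [mul_comm (∂_{v} (∂_{w} f) _)]
  linarith

lemma memLp_hessian_apply (b : ι → E) (f : 𝓢(E, ℝ)) (i j : ι) :
    MemLp (fun x => hessian b f x i j) 2 μ :=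
  (∂_{b i} (∂_{b j} f)).memLp 2 μ

lemma integral_sum_mul_hessian_mul_hessian {κ : Type*} (s : Finset κ) (c : κ → ℝ)
    (i j k l : κ → ι) (b : ι → E) (f : 𝓢(E, ℝ)) :
    ∫ x, ∑ m ∈ s, c m * (hessian b f x (i m) (j m) * hessian b f x (k m) (l m)) ∂μ =
      ∑ m ∈ s, c m * ∫ x, hessian b f x (i m) (j m) * hessian b f x (k m) (l m) ∂μ := by
  have hint : ∀ m, Integrable
      (fun x => hessian b f x (i m) (j m) * hessian b f x (k m) (l m)) μ :=
    fun m => (memLp_hessian_apply b f _ _).integrable_mul (memLp_hessian_apply b f _ _)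
  rw [integral_finsetSum _ fun m _ => (hint m).const_mul (c m)]
  simp only [integral_const_mul]

variable [Fintype ι]

lemma integral_trace_mul_hessian_mul (P S : Matrix ι ι ℝ) (b : ι → E) (f : 𝓢(E, ℝ)) :
    ∫ x, (P * hessian b f x).trace * (S * hessian b f x).trace ∂μ =
      ∫ x, (P * hessian b f x * S * hessian b f x).trace ∂μ := by
  let c (m : (ι × ι) × ι × ι) : ℝ := P m.1.1 m.1.2 * S m.2.1 m.2.2
  have hprod : ∀ H : Matrix ι ι ℝ, (P * H).trace * (S * H).trace =
      ∑ m, c m * (H m.1.2 m.1.1 * H m.2.2 m.2.1) := fun H => by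
    simp only [trace_mul_eq_sum, ← Fintype.sum_prod_type', Fintype.sum_mul_sum, c, mul_mul_mul_comm]
  have htrace : ∀ H : Matrix ι ι ℝ, (P * H * S * H).trace =
      ∑ m, c m * (H m.1.2 m.2.1 * H m.2.2 m.1.1) := fun H => by
    rw [Matrix.mul_assoc, trace_mul_eq_sum]
    simp only [Matrix.mul_apply, Fintype.sum_mul_sum, Fintype.sum_prod_type, c, mul_mul_mul_comm]
    exact Finset.sum_congr rfl fun i _ => Finset.sum_comm
  simp only [hprod, htrace, integral_sum_mul_hessian_mul_hessian]
  exact Finset.sum_congr rfl fun m _ => congrArg (c m * ·)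
    (integral_lineDerivOp_mul_lineDerivOp_swap f _ _ _ _)

lemma integral_trace_mul_hessian_mul_nonneg {P S : Matrix ι ι ℝ} (hP : P.PosSemidef)
    (hS : S.PosSemidef) (b : ι → E) (f : 𝓢(E, ℝ)) :
    0 ≤ ∫ x, (P * hessian b f x).trace * (S * hessian b f x).trace ∂μ := by
  rw [integral_trace_mul_hessian_mul]
  refine integral_nonneg fun x => ?_
  have := trace_mul_mul_mul_conjTranspose_nonneg hP hS (hessian b f x)
  rwa [(hessian_isHermitian b f x).eq] at this

lemma integrable_sum_hessian_sq (b : ι → E) (f : 𝓢(E, ℝ)) :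
    Integrable (fun x => ∑ i, ∑ j, hessian b f x i j ^ 2) μ :=
  integrable_finsetSum _ fun i _ => integrable_finsetSum _ fun j _ =>
    (memLp_hessian_apply b f i j).integrable_sq

lemma integral_trace_hessian_sq (b : ι → E) (f : 𝓢(E, ℝ)) :
    ∫ x, (hessian b f x).trace ^ 2 ∂μ = ∫ x, ∑ i, ∑ j, hessian b f x i j ^ 2 ∂μ := by
  classical
  have h := integral_trace_mul_hessian_mul (μ := μ) 1 1 b f
  simp only [one_mul, mul_one, ← sq] at h
  rw [h]
  refine integral_congr_ae (.of_forall fun x => ?_)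
  simp only [sq (hessian b f x), trace_mul_eq_sum]
  refine Finset.sum_congr rfl fun i _ => Finset.sum_congr rfl fun j _ => ?_
  rw [← (hessian_isHermitian b f x).apply i j, star_trivial, sq]

lemma integral_lineDerivOp_mul_trace_hessian_eq_zero (v : E) (b : ι → E) (f : 𝓢(E, ℝ)) :
    ∫ x, ∂_{v} f x * (hessian b f x).trace ∂μ = 0 := by
  simp only [Matrix.trace, Matrix.diag, Finset.mul_sum]
  rw [integral_finsetSum _ fun i _ =>
    ((∂_{v} f).memLp 2 μ).integrable_mul (memLp_hessian_apply b f i i)]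
  exact Finset.sum_eq_zero fun i _ => integral_lineDerivOp_mul_lineDerivOp_self_eq_zero f v (b i)

lemma memLp_trace_hessian (b : ι → E) (f : 𝓢(E, ℝ)) :
    MemLp (fun x => (hessian b f x).trace) 2 μ :=
  memLp_finsetSum _ fun i _ => memLp_hessian_apply b f i i

lemma memLp_trace_mul_hessian {A : E → Matrix ι ι ℝ} {C : ℝ}
    (hAm : ∀ i j, AEStronglyMeasurable (fun x => A x i j) μ) (hAC : ∀ x i j, |A x i j| ≤ C)
    (b : ι → E) (f : 𝓢(E, ℝ)) : MemLp (fun x => (A x * hessian b f x).trace) 2 μ := by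
  simp only [trace_mul_eq_sum]
  refine memLp_finsetSum _ fun i _ => memLp_finsetSum _ fun j _ => ?_
  refine (memLp_hessian_apply b f j i).of_le_mul (c := C)
    ((hAm i j).mul (memLp_hessian_apply b f j i).1) (.of_forall fun x => ?_)
  rw [norm_mul]
  exact mul_le_mul_of_nonneg_right (hAC x i j) (norm_nonneg _)

end Schwartz

section Slice

variable {X Y V : Type*} [NormedAddCommGroup X] [NormedSpace ℝ X] [NormedAddCommGroup Y]
  [NormedSpace ℝ Y] [NormedAddCommGroup V] [NormedSpace ℝ V]

lemma hasTemperateGrowth_prodMk_left (t : X) :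
    Function.HasTemperateGrowth fun y : Y => (t, y) := by
  simpa [Pi.add_def] using (Function.HasTemperateGrowth.const (t, (0 : Y))).add
    (ContinuousLinearMap.inr ℝ X Y).hasTemperateGrowth

/-- The restriction of a Schwartz function on `X × Y` to the slice `{t} × Y`, as a Schwartz
function on `Y`. -/
def schwartzSlice (f : 𝓢(X × Y, V)) (t : X) : 𝓢(Y, V) :=
  SchwartzMap.compCLMOfAntilipschitz ℝ (g := fun y => (t, y)) (K := 1)
    (hasTemperateGrowth_prodMk_left t)
    (AntilipschitzWith.of_le_mul_dist fun y z => by simp [Prod.dist_eq]) f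

lemma lineDerivOp_schwartzSlice_apply (f : 𝓢(X × Y, V)) (t : X) (v y : Y) :
    ∂_{v} (schwartzSlice f t) y = ∂_{((0 : X), v)} f (t, y) := by
  have h := (f.hasFDerivAt (t, y)).comp y (hasFDerivAt_prodMk_right t y)
  simp only [SchwartzMap.lineDerivOp_apply_eq_fderiv]
  exact congrArg (· v) h.fderiv

lemma lineDerivOp_schwartzSlice (f : 𝓢(X × Y, V)) (t : X) (v : Y) :
    ∂_{v} (schwartzSlice f t) = schwartzSlice (∂_{((0 : X), v)} f) t := by
  ext y
  exact lineDerivOp_schwartzSlice_apply f t v y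

lemma hessian_schwartzSlice {ι : Type*} (b : ι → Y) (f : 𝓢(X × Y, ℝ)) (t : X) (y : Y) :
    hessian b (schwartzSlice f t) y = hessian (fun i => ((0 : X), b i)) f (t, y) :=
  Matrix.ext fun i j => by
    simp only [hessian, Matrix.of_apply, lineDerivOp_schwartzSlice]
    rfl

lemma integral_prod_trace_mul_hessian_mul_nonneg {ι : Type*} [Fintype ι] [MeasurableSpace X]
    [MeasurableSpace Y] [BorelSpace Y] [FiniteDimensional ℝ Y] {μ : Measure X} [SFinite μ]
    {ν : Measure Y} [ν.IsAddHaarMeasure] {P S : X → Matrix ι ι ℝ} (hP : ∀ t, (P t).PosSemidef)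
    (hS : ∀ t, (S t).PosSemidef) (b : ι → Y) (f : 𝓢(X × Y, ℝ))
    (hint : Integrable (fun z => (P z.1 * hessian (fun i => ((0 : X), b i)) f z).trace *
      (S z.1 * hessian (fun i => ((0 : X), b i)) f z).trace) (μ.prod ν)) :
    0 ≤ ∫ z, (P z.1 * hessian (fun i => ((0 : X), b i)) f z).trace *
      (S z.1 * hessian (fun i => ((0 : X), b i)) f z).trace ∂μ.prod ν := by
  rw [integral_prod _ hint]
  refine integral_nonneg fun t => ?_
  simp only [← hessian_schwartzSlice]
  exact integral_trace_mul_hessian_mul_nonneg (hP t) (hS t) b (schwartzSlice f t)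

end Slice

section Parabolic

variable {d : ℕ}

instance isAddHaarMeasure_volume_pt : (volume : Measure (Pt d)).IsAddHaarMeasure :=
  inferInstanceAs ((volume : Measure ℝ).prod (volume : Measure (Spc d))).IsAddHaarMeasure

/-- The spatial coordinate directions of space-time. -/
def spaceDir (i : Fin d) : Pt d := (0, EuclideanSpace.single i 1)

lemma Dt_eq_lineDerivOp (u : 𝓢(Pt d, ℝ)) : Dt u = ∂_{((1 : ℝ), (0 : Spc d))} u := by
  ext z
  have h : HasDerivAt (fun s : ℝ => (s, z.2)) ((1 : ℝ), (0 : Spc d)) z.1 :=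
    (hasDerivAt_id z.1).prodMk (hasDerivAt_const z.1 z.2)
  exact ((u.hasFDerivAt z).comp_hasDerivAt z.1 h).deriv

lemma Dx_eq_lineDerivOp (i : Fin d) (u : 𝓢(Pt d, ℝ)) : Dx i u = ∂_{spaceDir i} u :=
  funext fun z => lineDerivOp_schwartzSlice_apply u z.1 _ z.2

lemma hessian_spaceDir_apply (u : 𝓢(Pt d, ℝ)) (z : Pt d) (i j : Fin d) :
    hessian spaceDir u z i j = Dxx i j u z := by
  rw [Dxx, Dx_eq_lineDerivOp, Dx_eq_lineDerivOp]
  rfl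

variable {δ : ℝ} {a : ℝ → Matrix (Fin d) (Fin d) ℝ}

lemma sum_mul_Dxx_eq_trace_mul_hessian (A : Matrix (Fin d) (Fin d) ℝ) (u : 𝓢(Pt d, ℝ))
    (z : Pt d) : ∑ i, ∑ j, A i j * Dxx i j u z = (A * hessian spaceDir u z).trace := by
  rw [trace_mul_eq_sum]
  refine Finset.sum_congr rfl fun i _ => Finset.sum_congr rfl fun j _ => ?_
  rw [← hessian_spaceDir_apply, ← (hessian_isHermitian spaceDir u z).apply i j, star_trivial]

lemma memLp_trace_mul_hessian_of_inS (hδ : 0 < δ) (ham : Measurable a)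
    (haS : ∀ t, inS d δ (a t)) (u : 𝓢(Pt d, ℝ)) :
    MemLp (fun z => (a z.1 * hessian spaceDir u z).trace) 2 :=
  memLp_trace_mul_hessian (fun i j => ((measurable_pi_apply j).comp
      ((measurable_pi_apply i).comp (ham.comp measurable_fst))).aestronglyMeasurable)
    (fun z => (haS z.1).abs_apply_le hδ) spaceDir u

lemma integral_trace_mul_hessian_sub_mul_sub_nonneg (hδ : 0 < δ) (ham : Measurable a)
    (haS : ∀ t, inS d δ (a t)) (u : 𝓢(Pt d, ℝ)) :
    0 ≤ ∫ z : Pt d, ((a z.1 * hessian spaceDir u z).trace - δ * (hessian spaceDir u z).trace) *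
      ((hessian spaceDir u z).trace - δ * (a z.1 * hessian spaceDir u z).trace) := by
  have hg := memLp_trace_mul_hessian_of_inS hδ ham haS u
  have hq := memLp_trace_hessian (μ := volume) spaceDir u
  have hint := (hg.sub (hq.const_mul δ)).integrable_mul (hq.sub (hg.const_mul δ))
  have htrace_sub : ∀ A H : Matrix (Fin d) (Fin d) ℝ,
      ((A - δ • 1) * H).trace = (A * H).trace - δ * H.trace := fun A H => by
    rw [sub_mul, smul_one_mul, Matrix.trace_sub, Matrix.trace_smul, smul_eq_mul]
  have hsub_trace : ∀ A H : Matrix (Fin d) (Fin d) ℝ,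
      ((1 - δ • A) * H).trace = H.trace - δ * (A * H).trace := fun A H => by
    rw [sub_mul, one_mul, Matrix.smul_mul, Matrix.trace_sub, Matrix.trace_smul, smul_eq_mul]
  have h := integral_prod_trace_mul_hessian_mul_nonneg (μ := volume) (ν := volume)
    (fun t => (haS t).posSemidef_sub_smul_one) (fun t => (haS t).posSemidef_one_sub_smul hδ)
    (fun i => EuclideanSpace.single i 1) u
  simp only [htrace_sub, hsub_trace] at h
  exact h hint

lemma integrable_Dt_sq_add_sum_Dxx_sq (u : 𝓢(Pt d, ℝ)) :
    Integrable fun z : Pt d => Dt u z ^ 2 + ∑ i, ∑ j, Dxx i j u z ^ 2 := by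
  simp only [Dt_eq_lineDerivOp, ← hessian_spaceDir_apply]
  exact (SchwartzMap.memLp _ 2 _).integrable_sq.add (integrable_sum_hessian_sq spaceDir u)

theorem stmt1_general (hδ0 : 0 < δ) (hδ1 : δ ≤ 1) (ham : Measurable a)
    (haS : ∀ t, inS d δ (a t)) (u : 𝓢(Pt d, ℝ)) :
    ∫ z : Pt d, (Dt u z ^ 2 + ∑ i, ∑ j, Dxx i j u z ^ 2) ≤
      δ⁻¹ ^ 2 * ∫ z : Pt d, (Dt u z + ∑ i, ∑ j, a z.1 i j * Dxx i j u z) ^ 2 := by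
  have hDt : MemLp (Dt u) 2 := Dt_eq_lineDerivOp u ▸ SchwartzMap.memLp _ 2 _
  have hlap := memLp_trace_hessian (μ := volume) spaceDir u
  have horth : ∫ z, Dt u z * (hessian spaceDir u z).trace = 0 :=
    Dt_eq_lineDerivOp u ▸ integral_lineDerivOp_mul_trace_hessian_eq_zero _ spaceDir u
  have hhess : ∫ z : Pt d, (Dt u z ^ 2 + ∑ i, ∑ j, Dxx i j u z ^ 2) =
      ∫ z, (Dt u z ^ 2 + (hessian spaceDir u z).trace ^ 2) := by
    rw [integral_add hDt.integrable_sq hlap.integrable_sq, integral_trace_hessian_sq,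
      ← integral_add hDt.integrable_sq (integrable_sum_hessian_sq spaceDir u)]
    simp only [hessian_spaceDir_apply]
  simp only [hhess, sum_mul_Dxx_eq_trace_mul_hessian]
  exact integral_sq_add_sq_le_of_integral_mul_eq_zero hδ0 hδ1 hDt hlap
    (memLp_trace_mul_hessian_of_inS hδ0 ham haS u) horth
    (integral_trace_mul_hessian_sub_mul_sub_nonneg hδ0 ham haS u)

end Parabolic

theorem stmt1 (d : ℕ) (hd : 1 ≤ d) (δ : ℝ) (hδ0 : 0 < δ) (hδ1 : δ ≤ 1)
    (a : ℝ → Matrix (Fin d) (Fin d) ℝ) (ham : Measurable a) (haS : ∀ t, inS d δ (a t))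
    (u : Pt d → ℝ) (hu : CinfC u) :
    (∫ z : Pt d, ((Dt u z) ^ 2 + δ ^ 2 * ∑ i, ∑ j, (Dxx i j u z) ^ 2)) ≤
      δ⁻¹ ^ 2 * ∫ z : Pt d, (Dt u z + ∑ i, ∑ j, a z.1 i j * Dxx i j u z) ^ 2 := by
  refine (integral_mono_of_nonneg (.of_forall fun z => by positivity)
    (integrable_Dt_sq_add_sum_Dxx_sq (hu.2.toSchwartzMap hu.1)) (.of_forall fun z => ?_)).trans
    (stmt1_general hδ0 hδ1 ham haS (hu.2.toSchwartzMap hu.1))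
  exact add_le_add_right (mul_le_of_le_one_left (by positivity) (pow_le_one₀ hδ0.le hδ1)) _
end
end

section
/- Let d ≥ 1, k > 0 and α ∈ (0, d+2]. Let f : ℝ^{1+d} → ℝ be a bounded measurable function with compact support. Then there is a constant N (depending on d, α, k and f) such that for all (t,x) ∈ ℝ^{1+d}, P_{α,k}|f|(t,x) := ∫_{ℝ^{1+d}} p_{α,k}(s,|y|) |f(t+s, x+y)| dy ds ≤ N (1 + ρ(t,x))^{−(d+2−α)}. -/
open MeasureTheory Metric Set
open scoped ENNReal NNReal

noncomputable section

/-!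
Completing the square in `(1 + v) ^ γ * exp (-v ^ 2 / k)` with `v = |y| / √s` bounds the kernel
pointwise by a multiple of `ρ ^ (-(d + 2 - α))`, for every real `α`. If `ρ(z)` is large compared
with the support of `f`, then `ρ(w)` and `1 + ρ(z)` are comparable whenever `f (z + w) ≠ 0`, so the
potential at `z` is at most a multiple of `(1 + ρ(z)) ^ (-(d + 2 - α)) * ‖f‖_{L¹}`. If `ρ(z)` is
bounded, only bounded times `s` contribute; the mass of the kernel at time `s` is a multiple of
`s ^ (α / 2 - 1)`, which is integrable at zero because `α > 0`.
-/

section ElementaryInequalities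

variable {v k a b c : ℝ}

lemma one_add_rpow_le_exp_abs_mul (hv : 0 ≤ v) (γ : ℝ) : (1 + v) ^ γ ≤ Real.exp (|γ| * v) := by
  rw [Real.rpow_def_of_pos (by positivity), Real.exp_le_exp]
  have hlog_nonneg : 0 ≤ Real.log (1 + v) := Real.log_nonneg (by linarith)
  have hlog_le : Real.log (1 + v) ≤ v := by
    linarith [Real.log_le_sub_one_of_pos (show 0 < 1 + v by positivity)]
  calc Real.log (1 + v) * γ ≤ Real.log (1 + v) * |γ| := by gcongr; exact le_abs_self γ
    _ ≤ v * |γ| := by gcongr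
    _ = |γ| * v := mul_comm _ _

lemma one_add_rpow_mul_exp_neg_sq_div_le (hk : 0 < k) (hv : 0 ≤ v) (γ : ℝ) :
    (1 + v) ^ γ * Real.exp (-v ^ 2 / k) ≤ Real.exp (k * γ ^ 2 / 4) := by
  have hsquare : k * γ ^ 2 / 4 - (|γ| * v + -v ^ 2 / k) = (k * |γ| / 2 - v) ^ 2 / k := by
    rw [← sq_abs γ]
    field_simp
    ring
  have hsquare_nonneg : 0 ≤ (k * |γ| / 2 - v) ^ 2 / k := by positivity
  calc (1 + v) ^ γ * Real.exp (-v ^ 2 / k)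
      ≤ Real.exp (|γ| * v) * Real.exp (-v ^ 2 / k) := by
        gcongr
        exact one_add_rpow_le_exp_abs_mul hv γ
    _ = Real.exp (|γ| * v + -v ^ 2 / k) := (Real.exp_add _ _).symm
    _ ≤ Real.exp (k * γ ^ 2 / 4) := Real.exp_le_exp.2 (by linarith)

lemma rpow_le_rpow_abs_mul_rpow (ha : 0 < a) (hb : 0 < b) (hba : b ≤ c * a) (hab : a ≤ c * b)
    (γ : ℝ) : b ^ γ ≤ c ^ |γ| * a ^ γ := by
  have hc : 0 < c := pos_of_mul_pos_left (hb.trans_le hba) ha.le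
  rcases le_total 0 γ with hγ | hγ
  · rw [abs_of_nonneg hγ, ← Real.mul_rpow hc.le ha.le]
    exact Real.rpow_le_rpow hb.le hba hγ
  · calc b ^ γ ≤ (c⁻¹ * a) ^ γ :=
          Real.rpow_le_rpow_of_nonpos (by positivity) ((inv_mul_le_iff₀ hc).2 hab) hγ
      _ = c ^ |γ| * a ^ γ := by
          rw [abs_of_nonpos hγ, Real.mul_rpow (by positivity) ha.le, Real.inv_rpow hc.le,
            Real.rpow_neg hc.le]

lemma sqrt_abs_add_le (s t : ℝ) : √|s + t| ≤ √|s| + √|t| := by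
  refine (Real.sqrt_le_sqrt (abs_add_le s t)).trans ?_
  simp only [Real.sqrt_eq_rpow]
  exact Real.rpow_add_le_add_rpow (abs_nonneg s) (abs_nonneg t) (by norm_num) (by norm_num)

end ElementaryInequalities

section ParabolicDistance

variable {d : ℕ}

lemma prho_nonneg (z : Pt d) : 0 ≤ prho z := by
  unfold prho
  positivity

lemma prho_neg (z : Pt d) : prho (-z) = prho z := by
  simp [prho]

lemma prho_add_le (z w : Pt d) : prho (z + w) ≤ prho z + prho w := by
  have hspace : ‖z.2 + w.2‖ ≤ ‖z.2‖ + ‖w.2‖ := norm_add_le _ _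
  have htime : √|z.1 + w.1| ≤ √|z.1| + √|w.1| := sqrt_abs_add_le _ _
  simp only [prho, Prod.fst_add, Prod.snd_add]
  linarith

lemma prho_le_prho_add_add_right (z w : Pt d) : prho z ≤ prho (z + w) + prho w := by
  simpa [prho_neg] using prho_add_le (z + w) (-w)

lemma prho_le_prho_add_add_left (z w : Pt d) : prho w ≤ prho (z + w) + prho z := by
  simpa only [add_comm w z] using prho_le_prho_add_add_right w z

lemma continuous_prho : Continuous (prho : Pt d → ℝ) := by
  unfold prho
  fun_prop

lemma fst_le_prho_sq (z : Pt d) : z.1 ≤ prho z ^ 2 := by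
  have hsqrt : √|z.1| ≤ prho z := le_add_of_nonneg_left (norm_nonneg z.2)
  exact (le_abs_self _).trans ((Real.sqrt_le_left (prho_nonneg z)).1 hsqrt)

lemma exists_prho_le_of_ne_zero {f : Pt d → ℝ} (hf : HasCompactSupport f) :
    ∃ R, ∀ z, f z ≠ 0 → prho z ≤ R := by
  obtain ⟨R, hR⟩ := hf.isCompact.bddAbove_image continuous_prho.continuousOn
  exact ⟨R, fun z hz => hR (mem_image_of_mem prho (subset_tsupport f hz))⟩

end ParabolicDistance

section Kernel

variable {d : ℕ} {α k s r : ℝ}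

lemma pak_of_pos (hs : 0 < s) :
    pak d α k s r = s ^ (-((d : ℝ) + 2 - α) / 2) * Real.exp (-(r ^ 2) / (k * s)) :=
  if_pos hs

lemma pak_of_nonpos (hs : s ≤ 0) : pak d α k s r = 0 :=
  if_neg hs.not_gt

lemma pak_nonneg : 0 ≤ pak d α k s r := by
  unfold pak
  split_ifs <;> positivity

lemma measurable_pak_norm : Measurable fun w : Pt d => pak d α k w.1 ‖w.2‖ :=
  Measurable.ite (measurableSet_lt measurable_const measurable_fst) (by fun_prop) (by fun_prop)

lemma pak_le_exp_mul_rpow (hk : 0 < k) (hr : 0 ≤ r) :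
    pak d α k s r ≤ Real.exp (k * ((d : ℝ) + 2 - α) ^ 2 / 4) *
      (r + √|s|) ^ (-((d : ℝ) + 2 - α)) := by
  rcases le_or_gt s 0 with hs | hs
  · rw [pak_of_nonpos hs]
    positivity
  set β : ℝ := (d : ℝ) + 2 - α
  have hsqrt : 0 < √s := Real.sqrt_pos.2 hs
  have hrescale : r + √|s| = √s * (1 + r / √s) := by
    rw [abs_of_pos hs]
    field_simp
    ring
  have htime : s ^ (-β / 2) = √s ^ (-β) := by
    rw [Real.sqrt_eq_rpow, ← Real.rpow_mul hs.le]
    ring_nf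
  have hexponent : -(r ^ 2) / (k * s) = -(r / √s) ^ 2 / k := by
    rw [div_pow, Real.sq_sqrt hs.le]
    field_simp
  have hcancel : (1 + r / √s) ^ β * (1 + r / √s) ^ (-β) = 1 := by
    rw [← Real.rpow_add (by positivity), add_neg_cancel, Real.rpow_zero]
  calc pak d α k s r
      = √s ^ (-β) * ((1 + r / √s) ^ β * (1 + r / √s) ^ (-β)) * Real.exp (-(r / √s) ^ 2 / k) := by
        rw [pak_of_pos hs, htime, hexponent, hcancel, mul_one]
    _ = (1 + r / √s) ^ β * Real.exp (-(r / √s) ^ 2 / k) * (√s * (1 + r / √s)) ^ (-β) := by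
        rw [Real.mul_rpow hsqrt.le (by positivity)]
        ring
    _ ≤ Real.exp (k * β ^ 2 / 4) * (r + √|s|) ^ (-β) := by
        rw [hrescale]
        gcongr
        exact one_add_rpow_mul_exp_neg_sq_div_le hk (by positivity) β

lemma lintegral_exp_neg_mul_sq_norm {V : Type*} [NormedAddCommGroup V] [InnerProductSpace ℝ V]
    [FiniteDimensional ℝ V] [MeasurableSpace V] [BorelSpace V] {b : ℝ} (hb : 0 < b) :
    ∫⁻ y : V, ENNReal.ofReal (Real.exp (-b * ‖y‖ ^ 2)) =
      ENNReal.ofReal ((Real.pi / b) ^ (Module.finrank ℝ V / 2 : ℝ)) := by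
  have hintegral := GaussianFourier.integral_rexp_neg_mul_sq_norm (V := V) hb
  have hintegrable : Integrable fun y : V => Real.exp (-b * ‖y‖ ^ 2) :=
    .of_integral_ne_zero (by rw [hintegral]; positivity)
  rw [← hintegral, ofReal_integral_eq_lintegral_ofReal hintegrable
    (ae_of_all _ fun _ => by positivity)]

lemma lintegral_pak_norm (hk : 0 < k) (hs : 0 < s) :
    ∫⁻ y : Spc d, ENNReal.ofReal (pak d α k s ‖y‖) =
      ENNReal.ofReal ((Real.pi * k) ^ ((d : ℝ) / 2) * s ^ (α / 2 - 1)) := by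
  have hgauss (y : Spc d) : ENNReal.ofReal (pak d α k s ‖y‖) =
      ENNReal.ofReal (s ^ (-((d : ℝ) + 2 - α) / 2)) *
        ENNReal.ofReal (Real.exp (-(k * s)⁻¹ * ‖y‖ ^ 2)) := by
    rw [pak_of_pos hs, ← ENNReal.ofReal_mul (by positivity)]
    congr 3
    field_simp
  have hpower : s ^ (-((d : ℝ) + 2 - α) / 2) * (Real.pi / (k * s)⁻¹) ^ ((d : ℝ) / 2) =
      (Real.pi * k) ^ ((d : ℝ) / 2) * s ^ (α / 2 - 1) := by
    rw [div_inv_eq_mul, ← mul_assoc, Real.mul_rpow (by positivity) hs.le, mul_left_comm,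
      ← Real.rpow_add hs]
    ring_nf
  simp_rw [hgauss]
  rw [lintegral_const_mul _ (by fun_prop), lintegral_exp_neg_mul_sq_norm (by positivity),
    finrank_euclideanSpace_fin, ← ENNReal.ofReal_mul (by positivity), hpower]

lemma setLIntegral_ofReal_rpow_lt_top {p : ℝ} (hp : -1 < p) (c T : ℝ) :
    ∫⁻ s in Ioc 0 T, ENNReal.ofReal (c * s ^ p) < ∞ := by
  have hintegrable : IntegrableOn (fun s : ℝ => c * s ^ p) (Ioc 0 T) :=
    (intervalIntegral.intervalIntegrable_rpow' hp).1.const_mul c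
  exact (lintegral_ofReal_le_lintegral_enorm _).trans_lt hintegrable.2

lemma setLIntegral_pak_norm_lt_top (hk : 0 < k) (hα : 0 < α) (T : ℝ) :
    ∫⁻ w in {w : Pt d | w.1 ≤ T}, ENNReal.ofReal (pak d α k w.1 ‖w.2‖) < ∞ := by
  have hstrip : {w : Pt d | w.1 ≤ T} = Iic T ×ˢ univ := by ext; simp
  have hslice (s : ℝ) : ∫⁻ y : Spc d, ENNReal.ofReal (pak d α k s ‖y‖) =
      (Ioi 0).indicator
        (fun s => ENNReal.ofReal ((Real.pi * k) ^ ((d : ℝ) / 2) * s ^ (α / 2 - 1))) s := by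
    rcases le_or_gt s 0 with hs | hs
    · simp [pak_of_nonpos hs, hs]
    · rw [lintegral_pak_norm hk hs, indicator_of_mem (mem_Ioi.2 hs)]
  rw [hstrip, Measure.volume_eq_prod, ← Measure.prod_restrict, Measure.restrict_univ,
    lintegral_prod _ measurable_pak_norm.ennreal_ofReal.aemeasurable]
  simp_rw [hslice]
  rw [setLIntegral_indicator measurableSet_Ioi, Ioi_inter_Iic]
  exact setLIntegral_ofReal_rpow_lt_top (by linarith) _ T

end Kernel

lemma lintegral_ofReal_abs_lt_top {X : Type*} [TopologicalSpace X] [MeasurableSpace X]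
    [OpensMeasurableSpace X] {μ : Measure X} [IsFiniteMeasureOnCompacts μ] {f : X → ℝ} {M : ℝ}
    (hM : ∀ z, |f z| ≤ M) (hf : HasCompactSupport f) : ∫⁻ z, ENNReal.ofReal |f z| ∂μ < ∞ := by
  have hbound (z : X) :
      ENNReal.ofReal |f z| ≤ (tsupport f).indicator (fun _ => ENNReal.ofReal M) z := by
    by_cases hz : z ∈ tsupport f
    · rw [indicator_of_mem hz]
      exact ENNReal.ofReal_le_ofReal (hM z)
    · simp [image_eq_zero_of_notMem_tsupport hz]
  calc ∫⁻ z, ENNReal.ofReal |f z| ∂μ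
      ≤ ∫⁻ z, (tsupport f).indicator (fun _ => ENNReal.ofReal M) z ∂μ := lintegral_mono hbound
    _ = ENNReal.ofReal M * μ (tsupport f) :=
        lintegral_indicator_const (isClosed_tsupport f).measurableSet _
    _ < ∞ := ENNReal.mul_lt_top ENNReal.ofReal_lt_top hf.isCompact.measure_lt_top

/-- The potential `P_{α,k}|f|(z)`, with values in `ℝ≥0∞` so that no integrability is presupposed. -/
def heatPotential {d : ℕ} (α k : ℝ) (f : Pt d → ℝ) (z : Pt d) : ℝ≥0∞ :=
  ∫⁻ w : Pt d, ENNReal.ofReal (pak d α k w.1 ‖w.2‖ * |f (z + w)|)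

section Potential

variable {d : ℕ} {α k M R : ℝ} {f : Pt d → ℝ} {z : Pt d}

lemma pak_le_of_far {w : Pt d} (hk : 0 < k) (hfar : 2 * R + 1 ≤ prho z) (hw : prho (z + w) ≤ R) :
    pak d α k w.1 ‖w.2‖ ≤ Real.exp (k * ((d : ℝ) + 2 - α) ^ 2 / 4) * 2 ^ |(d : ℝ) + 2 - α| *
      (1 + prho z) ^ (-((d : ℝ) + 2 - α)) := by
  set β : ℝ := (d : ℝ) + 2 - α
  have hz : 0 ≤ prho z := prho_nonneg z
  have hlower : 1 + prho z ≤ 2 * prho w := by linarith [prho_le_prho_add_add_right z w]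
  have hupper : prho w ≤ 2 * (1 + prho z) := by linarith [prho_le_prho_add_add_left z w]
  calc pak d α k w.1 ‖w.2‖ ≤ Real.exp (k * β ^ 2 / 4) * prho w ^ (-β) :=
        pak_le_exp_mul_rpow hk (norm_nonneg _)
    _ ≤ Real.exp (k * β ^ 2 / 4) * (2 ^ |-β| * (1 + prho z) ^ (-β)) := by
        gcongr
        exact rpow_le_rpow_abs_mul_rpow (by positivity) (by linarith) hupper hlower _
    _ = Real.exp (k * β ^ 2 / 4) * 2 ^ |β| * (1 + prho z) ^ (-β) := by
        rw [abs_neg, mul_assoc]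

lemma heatPotential_le_of_far (hk : 0 < k) (hR : ∀ z, f z ≠ 0 → prho z ≤ R)
    (hfar : 2 * R + 1 ≤ prho z) :
    heatPotential α k f z ≤
      ENNReal.ofReal (Real.exp (k * ((d : ℝ) + 2 - α) ^ 2 / 4) * 2 ^ |(d : ℝ) + 2 - α| *
          (1 + prho z) ^ (-((d : ℝ) + 2 - α))) * ∫⁻ w, ENNReal.ofReal |f w| := by
  set β : ℝ := (d : ℝ) + 2 - α
  have hz : 0 ≤ prho z := prho_nonneg z
  have hbound (w : Pt d) : ENNReal.ofReal (pak d α k w.1 ‖w.2‖ * |f (z + w)|) ≤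
      ENNReal.ofReal (Real.exp (k * β ^ 2 / 4) * 2 ^ |β| * (1 + prho z) ^ (-β)) *
        ENNReal.ofReal |f (z + w)| := by
    rcases eq_or_ne (f (z + w)) 0 with hw | hw
    · simp [hw]
    · rw [← ENNReal.ofReal_mul (by positivity)]
      gcongr
      exact pak_le_of_far hk hfar (hR _ hw)
  have hinvariant : (volume : Measure (Pt d)).IsAddLeftInvariant := by
    rw [Measure.volume_eq_prod]
    infer_instance
  refine (lintegral_mono hbound).trans_eq ?_
  rw [lintegral_const_mul' _ _ ENNReal.ofReal_ne_top,
    lintegral_add_left_eq_self (fun w => ENNReal.ofReal |f w|) z]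

lemma heatPotential_le_of_near {A : ℝ} (hM : ∀ z, |f z| ≤ M) (hR : ∀ z, f z ≠ 0 → prho z ≤ R)
    (hnear : prho z ≤ A) :
    heatPotential α k f z ≤ ENNReal.ofReal M *
      ∫⁻ w in {w : Pt d | w.1 ≤ (R + A) ^ 2}, ENNReal.ofReal (pak d α k w.1 ‖w.2‖) := by
  set S : Set (Pt d) := {w | w.1 ≤ (R + A) ^ 2}
  have hS : MeasurableSet S := measurableSet_le measurable_fst measurable_const
  have hmem (w : Pt d) (hw : f (z + w) ≠ 0) : w ∈ S := by
    have hρ : prho w ≤ R + A :=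
      (prho_le_prho_add_add_left z w).trans (add_le_add (hR _ hw) hnear)
    exact (fst_le_prho_sq w).trans (pow_le_pow_left₀ (prho_nonneg w) hρ 2)
  have hbound (w : Pt d) : ENNReal.ofReal (pak d α k w.1 ‖w.2‖ * |f (z + w)|) ≤
      ENNReal.ofReal M * S.indicator (fun w => ENNReal.ofReal (pak d α k w.1 ‖w.2‖)) w := by
    rcases eq_or_ne (f (z + w)) 0 with hw | hw
    · simp [hw]
    · rw [indicator_of_mem (hmem w hw), ENNReal.ofReal_mul pak_nonneg, mul_comm]
      gcongr
      exact hM _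
  refine (lintegral_mono hbound).trans_eq ?_
  rw [lintegral_const_mul' _ _ ENNReal.ofReal_ne_top, lintegral_indicator hS]

lemma one_le_ofReal_rpow_abs_mul_rpow_of_prho_le {A : ℝ} (hA : prho z ≤ A) (γ : ℝ) :
    1 ≤ ENNReal.ofReal ((1 + A) ^ |γ|) * ENNReal.ofReal ((1 + prho z) ^ γ) := by
  have hz : 0 ≤ prho z := prho_nonneg z
  have hcompare : (1 : ℝ) ^ γ ≤ (1 + A) ^ |γ| * (1 + prho z) ^ γ :=
    rpow_le_rpow_abs_mul_rpow (by linarith) one_pos (by nlinarith) (by linarith) γ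
  rw [← ENNReal.ofReal_mul (Real.rpow_nonneg (by linarith) _), ENNReal.one_le_ofReal]
  rwa [Real.one_rpow] at hcompare

lemma exists_heatPotential_le_mul_rpow (hk : 0 < k) (hα : 0 < α) (hM : ∀ z, |f z| ≤ M)
    (hf : HasCompactSupport f) :
    ∃ C : ℝ≥0∞, C ≠ ∞ ∧ ∀ z, heatPotential α k f z ≤
      C * ENNReal.ofReal ((1 + prho z) ^ (-((d : ℝ) + 2 - α))) := by
  set β : ℝ := (d : ℝ) + 2 - α
  obtain ⟨R, hR⟩ := exists_prho_le_of_ne_zero hf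
  set A : ℝ := 2 * R + 1
  set cFar : ℝ≥0∞ := ENNReal.ofReal (Real.exp (k * β ^ 2 / 4) * 2 ^ |β|) *
    ∫⁻ w, ENNReal.ofReal |f w|
  set mass : ℝ≥0∞ := ENNReal.ofReal M *
    ∫⁻ w in {w : Pt d | w.1 ≤ (R + A) ^ 2}, ENNReal.ofReal (pak d α k w.1 ‖w.2‖)
  have hFar : cFar ≠ ∞ :=
    ENNReal.mul_ne_top ENNReal.ofReal_ne_top (lintegral_ofReal_abs_lt_top hM hf).ne
  have hmass : mass ≠ ∞ :=
    ENNReal.mul_ne_top ENNReal.ofReal_ne_top (setLIntegral_pak_norm_lt_top hk hα _).ne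
  refine ⟨cFar + mass * ENNReal.ofReal ((1 + A) ^ |-β|),
    ENNReal.add_ne_top.2 ⟨hFar, ENNReal.mul_ne_top hmass ENNReal.ofReal_ne_top⟩, fun z => ?_⟩
  rcases le_total A (prho z) with hfar | hnear
  · calc heatPotential α k f z ≤ _ := heatPotential_le_of_far hk hR hfar
      _ = cFar * ENNReal.ofReal ((1 + prho z) ^ (-β)) := by
          rw [ENNReal.ofReal_mul (by positivity), mul_right_comm]
      _ ≤ _ := by gcongr; exact le_self_add
  · calc heatPotential α k f z ≤ mass := heatPotential_le_of_near hM hR hnear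
      _ ≤ mass * (ENNReal.ofReal ((1 + A) ^ |-β|) * ENNReal.ofReal ((1 + prho z) ^ (-β))) :=
          le_mul_of_one_le_right' (one_le_ofReal_rpow_abs_mul_rpow_of_prho_le hnear _)
      _ ≤ _ := by rw [← mul_assoc]; gcongr; exact le_add_self

end Potential

theorem stmt3_general (d : ℕ) (k : ℝ) (hk : 0 < k) (α : ℝ) (hα : 0 < α) (f : Pt d → ℝ)
    (hbd : ∃ M, ∀ z, |f z| ≤ M) (hsupp : HasCompactSupport f) :
    ∃ N : ℝ, 0 < N ∧ ∀ t : ℝ, ∀ x : Spc d,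
      (∫⁻ w : Pt d, ENNReal.ofReal (pak d α k w.1 ‖w.2‖ * |f (t + w.1, x + w.2)|)) ≤
        ENNReal.ofReal (N * (1 + prho (t, x)) ^ (-((d : ℝ) + 2 - α))) := by
  obtain ⟨M, hM⟩ := hbd
  obtain ⟨C, hC, hpotential⟩ := exists_heatPotential_le_mul_rpow hk hα hM hsupp
  refine ⟨C.toReal + 1, by positivity, fun t x => ?_⟩
  calc heatPotential α k f (t, x)
      ≤ C * ENNReal.ofReal ((1 + prho (t, x)) ^ (-((d : ℝ) + 2 - α))) := hpotential (t, x)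
    _ ≤ ENNReal.ofReal (C.toReal + 1) *
          ENNReal.ofReal ((1 + prho (t, x)) ^ (-((d : ℝ) + 2 - α))) := by
        gcongr
        exact (ENNReal.le_ofReal_iff_toReal_le hC (by positivity)).2 (by linarith)
    _ = _ := (ENNReal.ofReal_mul (by positivity)).symm

theorem stmt3 (d : ℕ) (hd : 1 ≤ d) (k : ℝ) (hk : 0 < k) (α : ℝ)
    (hα0 : 0 < α) (hα : α ≤ (d : ℝ) + 2)
    (f : Pt d → ℝ) (hmeas : Measurable f) (hbd : ∃ M, ∀ z, |f z| ≤ M)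
    (hsupp : HasCompactSupport f) :
    ∃ N : ℝ, 0 < N ∧ ∀ t : ℝ, ∀ x : Spc d,
      (∫⁻ w : Pt d, ENNReal.ofReal (pak d α k w.1 ‖w.2‖ * |f (t + w.1, x + w.2)|)) ≤
        ENNReal.ofReal (N * (1 + prho (t, x)) ^ (-((d : ℝ) + 2 - α))) :=
  stmt3_general d k hk α hα0 f hbd hsupp
end
end
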